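/- Let V be a finite set, k a positive integer with 2k ≤ |V|, and S ⊆ V with |S| = 2k. Define g_S(X) = 2k − |X| if X ⊆ S and |X| ≥ k+1, g_S(∅) = 0, and g_S(X) = |X| otherwise. Then g_S is posimodular. -/

import Mathlib

/-!
Every `Z` satisfies `gS Z ≤ |Z|`, and every `Z ⊆ S` also satisfies `gS Z ≤ 2k - |Z|`.
With `a = |X \ Y|`, `b = |Y \ X|`, `c = |X ∩ Y|`:
* if neither `X` nor `Y` is a large subset of `S`, the left side is `a + b + 2c`, at least `a + b`;
* if only `X` is, the left side is `(2k - a - c) + (b + c) = (2k - a) + b`, and `X \ Y ⊆ S`;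
* if both are, the left side is `4k - a - b - 2c`, at least `a + b` since
  `a + b + c = |X ∪ Y| ≤ |S| = 2k`.
-/

theorem stmt_4 (V : Type*) [Fintype V] [DecidableEq V] (k : ℕ) (hk : 0 < k)
    (hkn : 2 * k ≤ Fintype.card V)
    (S : Finset V) (hS : S.card = 2 * k)
    (gS : Finset V → ℝ)
    (hgS : ∀ X : Finset V,
      gS X = if X ⊆ S ∧ k + 1 ≤ X.card then (2 * k : ℝ) - X.card else (X.card : ℝ)) :
    ∀ X Y : Finset V, gS X + gS Y ≥ gS (X \ Y) + gS (Y \ X) := by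
  have le_card : ∀ Z, gS Z ≤ Z.card := by
    intro Z
    rw [hgS]
    split_ifs with h
    · have : (k : ℝ) + 1 ≤ Z.card := mod_cast h.2
      linarith
    · exact le_rfl
  have le_compl : ∀ Z, Z ⊆ S → gS Z ≤ 2 * k - Z.card := by
    intro Z hZ
    rw [hgS]
    split_ifs with h
    · exact le_rfl
    · have : Z.card ≤ k := by
        by_contra hc
        exact h ⟨hZ, by omega⟩
      have : (Z.card : ℝ) ≤ k := mod_cast this
      linarith
  intro X Y
  have hX : ((X \ Y).card : ℝ) + (X ∩ Y).card = X.card :=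
    mod_cast Finset.card_sdiff_add_card_inter X Y
  have hY : ((Y \ X).card : ℝ) + (X ∩ Y).card = Y.card := by
    rw [Finset.inter_comm]
    exact_mod_cast Finset.card_sdiff_add_card_inter Y X
  have hc : (0 : ℝ) ≤ (X ∩ Y).card := Nat.cast_nonneg _
  have h1 := le_card (X \ Y)
  have h2 := le_card (Y \ X)
  rw [hgS X, hgS Y]
  split_ifs with hXS hYS hYS
  · have hU : ((X ∪ Y).card : ℝ) ≤ 2 * k := by
      exact_mod_cast hS ▸ Finset.card_le_card (Finset.union_subset hXS.1 hYS.1)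
    have hUI : ((X ∪ Y).card : ℝ) + (X ∩ Y).card = X.card + Y.card :=
      mod_cast Finset.card_union_add_card_inter X Y
    linarith
  · have := le_compl (X \ Y) (Finset.sdiff_subset.trans hXS.1)
    linarith
  · have := le_compl (Y \ X) (Finset.sdiff_subset.trans hYS.1)
    linarith
  · linarith
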